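/- arXiv:1903.00207 — 2 statements merged into one kernel-verified Lean document; each statement's English description precedes it below -/
import Mathlib

section
/- Let ζ ∈ (0,π) and σ ∈ {0,1}. The Suzuki–Takahashi conditions for a 5-string, namely (−1)^σ · sin(kζ) · sin((5−k)ζ) > 0 for all k = 1, 2, 3, 4, hold if and only if either (σ = 0 and ζ ∈ (0, π/4) ∪ (π/2, 2π/3)) or (σ = 1 and ζ ∈ (π/3, π/2) ∪ (3π/4, π)). -/
/-!
Since `sin (k * ζ) = U_{k-1} (cos ζ) * sin ζ`, for `0 < ζ < π` each condition says that a product of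
two Chebyshev polynomials of the second kind has a prescribed sign at `c = cos ζ`. For a 5-string of
parity `0`, what remains is `0 < c * (c ^ 2 - cos (π / 4) ^ 2)` and
`0 < c * (c ^ 2 - cos (π / 3) ^ 2)`, and the intervals for `ζ` are read off because `cos` decreases
on `[0, π]`. For odd `r`, the reflection `ζ ↦ π - ζ` exchanges the two parities.
-/

section

open Real Set Polynomial.Chebyshev

/-- The Suzuki–Takahashi conditions for the existence of an `r`-string of parity `σ` at anisotropy
`cos ζ`. The subtraction `r - k` is taken in `ℝ`. -/
def SuzukiTakahashi (r σ : ℕ) (ζ : ℝ) : Prop :=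
  ∀ k : ℕ, 1 ≤ k → k < r → 0 < (-1 : ℝ) ^ σ * sin (k * ζ) * sin ((r - k) * ζ)

lemma suzukiTakahashi_iff_two_mul_le {r σ : ℕ} {ζ : ℝ} :
    SuzukiTakahashi r σ ζ ↔
      ∀ k : ℕ, 1 ≤ k → 2 * k ≤ r → 0 < (-1 : ℝ) ^ σ * sin (k * ζ) * sin ((r - k) * ζ) := by
  refine ⟨fun h k hk hkr => h k hk (by lia), fun h k hk hkr => ?_⟩
  rcases le_total (2 * k) r with hle | hle
  · exact h k hk hle
  · have hreflect := h (r - k) (by lia) (by lia)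
    rw [Nat.cast_sub hkr.le, sub_sub_cancel] at hreflect
    rwa [mul_right_comm]

lemma suzukiTakahashi_iff_eval_U {r σ : ℕ} {ζ : ℝ} (hζ : sin ζ ≠ 0) :
    SuzukiTakahashi r σ ζ ↔ ∀ k : ℕ, 1 ≤ k → 2 * k ≤ r →
      0 < (-1 : ℝ) ^ σ * (U ℝ (k - 1)).eval (cos ζ) * (U ℝ (r - k - 1)).eval (cos ζ) := by
  rw [suzukiTakahashi_iff_two_mul_le]
  refine forall₃_congr fun k _ _ => ?_
  have hU (n : ℤ) : sin (n * ζ) = (U ℝ (n - 1)).eval (cos ζ) * sin ζ := by simp [U_real_cos]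
  have hk : sin (k * ζ) = (U ℝ (k - 1)).eval (cos ζ) * sin ζ := mod_cast hU k
  have hrk : sin ((r - k) * ζ) = (U ℝ (r - k - 1)).eval (cos ζ) * sin ζ := mod_cast hU (r - k)
  rw [hk, hrk, ← mul_assoc, ← mul_assoc, mul_right_comm _ (sin ζ), mul_assoc,
    mul_pos_iff_of_pos_right (mul_self_pos.mpr hζ)]

lemma suzukiTakahashi_pi_sub {r : ℕ} (hr : Odd r) {σ : ℕ} {ζ : ℝ} :
    SuzukiTakahashi r σ (π - ζ) ↔ SuzukiTakahashi r (σ + 1) ζ := by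
  refine forall₃_congr fun k _ hkr => ?_
  have hsin (n : ℕ) : sin (n * (π - ζ)) = -((-1) ^ n * sin (n * ζ)) := by
    rw [mul_sub, sin_nat_mul_pi_sub]
  have hsign : (-1 : ℝ) ^ k * (-1) ^ (r - k) = -1 := by
    rw [← pow_add, Nat.add_sub_cancel' hkr.le, hr.neg_one_pow]
  have hprod : sin (k * (π - ζ)) * sin ((r - k : ℕ) * (π - ζ)) =
      -(sin (k * ζ) * sin ((r - k : ℕ) * ζ)) := calc
    _ = ((-1) ^ k * (-1) ^ (r - k)) * (sin (k * ζ) * sin ((r - k : ℕ) * ζ)) := by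
      rw [hsin, hsin]
      ring
    _ = _ := by rw [hsign, neg_one_mul]
  rw [← Nat.cast_sub hkr.le, mul_assoc, hprod, mul_assoc, pow_succ, mul_neg_one, neg_mul, mul_neg]

lemma mul_sq_sub_sq_pos_and_mul_sq_sub_sq_pos_iff {a b x : ℝ} (hb : 0 ≤ b) (hba : b ≤ a) :
    0 < x * (x ^ 2 - a ^ 2) ∧ 0 < x * (x ^ 2 - b ^ 2) ↔ a < x ∨ -b < x ∧ x < 0 := by
  constructor
  · rintro ⟨ha_pos, hb_pos⟩
    rcases lt_or_ge x 0 with hx | hx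
    · have hxb : x ^ 2 < b ^ 2 := sub_neg.mp (neg_of_mul_pos_right hb_pos hx.le)
      exact .inr ⟨(abs_lt_of_sq_lt_sq' hxb hb).1, hx⟩
    · have hax : a ^ 2 < x ^ 2 := sub_pos.mp (pos_of_mul_pos_right ha_pos hx)
      exact .inl (lt_of_pow_lt_pow_left₀ 2 hx hax)
  · rintro (hax | ⟨hbx, hx⟩)
    · have hx : 0 < x := (hb.trans hba).trans_lt hax
      exact ⟨mul_pos hx (sub_pos.mpr (by gcongr; exact hb.trans hba)),
        mul_pos hx (sub_pos.mpr (by gcongr; exact hba.trans_lt hax))⟩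
    · have hxb : x ^ 2 < b ^ 2 := sq_lt_sq' hbx (by linarith)
      have hba_sq : b ^ 2 ≤ a ^ 2 := by gcongr
      exact ⟨mul_pos_of_neg_of_neg hx (by linarith), mul_pos_of_neg_of_neg hx (by linarith)⟩

lemma eval_U_two_eq_sq_sub_cos_sq (x : ℝ) : (U ℝ 2).eval x = 4 * (x ^ 2 - cos (π / 3) ^ 2) := by
  norm_num [U_two]
  ring

lemma eval_U_three_eq_mul_sq_sub_cos_sq (x : ℝ) :
    (U ℝ 3).eval x = 8 * (x * (x ^ 2 - cos (π / 4) ^ 2)) := by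
  rw [show (3 : ℤ) = 1 + 2 from rfl, U_add_two]
  norm_num [U_one, U_two, div_pow]
  ring

lemma suzukiTakahashi_five_iff_eval_U {σ : ℕ} {ζ : ℝ} (hζ : sin ζ ≠ 0) :
    SuzukiTakahashi 5 σ ζ ↔ 0 < (-1 : ℝ) ^ σ * (U ℝ 3).eval (cos ζ) ∧
      0 < (-1 : ℝ) ^ σ * (U ℝ 1).eval (cos ζ) * (U ℝ 2).eval (cos ζ) := by
  rw [suzukiTakahashi_iff_eval_U hζ]
  constructor
  · intro h
    exact ⟨by simpa using h 1 (by simp) (by simp), by simpa using h 2 (by simp) (by simp)⟩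
  · rintro ⟨h₁, h₂⟩ k hk hk5
    obtain rfl | rfl : k = 1 ∨ k = 2 := by lia
    · simpa using h₁
    · simpa using h₂

lemma suzukiTakahashi_five_zero_iff_cos {ζ : ℝ} (hζ : sin ζ ≠ 0) :
    SuzukiTakahashi 5 0 ζ ↔
      cos (π / 4) < cos ζ ∨ -cos (π / 3) < cos ζ ∧ cos ζ < 0 := by
  have hle : cos (π / 3) ≤ cos (π / 4) :=
    cos_le_cos_of_nonneg_of_le_pi (by positivity) (by linarith [pi_pos]) (by linarith [pi_pos])
  have hU₁₂ : (U ℝ 1).eval (cos ζ) * (U ℝ 2).eval (cos ζ) =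
      8 * (cos ζ * (cos ζ ^ 2 - cos (π / 3) ^ 2)) := by
    rw [U_one, eval_U_two_eq_sq_sub_cos_sq]
    simp only [Polynomial.eval_mul, Polynomial.eval_ofNat, Polynomial.eval_X]
    ring
  have h8 : (0 : ℝ) < 8 := by norm_num
  rw [suzukiTakahashi_five_iff_eval_U hζ, pow_zero, one_mul, one_mul, hU₁₂,
    eval_U_three_eq_mul_sq_sub_cos_sq, mul_pos_iff_of_pos_left h8, mul_pos_iff_of_pos_left h8,
    mul_sq_sub_sq_pos_and_mul_sq_sub_sq_pos_iff (by simp) hle]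

lemma suzukiTakahashi_five_zero_iff {ζ : ℝ} (hζ : ζ ∈ Ioo 0 π) :
    SuzukiTakahashi 5 0 ζ ↔ ζ ∈ Ioo 0 (π / 4) ∪ Ioo (π / 2) (2 * π / 3) := by
  have hcos_lt {a b : ℝ} (ha : a ∈ Icc 0 π) (hb : b ∈ Icc 0 π) : cos a < cos b ↔ b < a :=
    strictAntiOn_cos.lt_iff_gt ha hb
  have hpi := pi_pos
  have hζ' := Ioo_subset_Icc_self hζ
  rw [suzukiTakahashi_five_zero_iff_cos (sin_pos_of_mem_Ioo hζ).ne', ← cos_pi_sub, ← cos_pi_div_two,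
    hcos_lt ⟨by linarith, by linarith⟩ hζ', hcos_lt ⟨by linarith, by linarith⟩ hζ',
    hcos_lt hζ' ⟨by linarith, by linarith⟩, show π - π / 3 = 2 * π / 3 by ring]
  simp [hζ.1, and_comm]

lemma suzukiTakahashi_five_one_iff {ζ : ℝ} (hζ : ζ ∈ Ioo 0 π) :
    SuzukiTakahashi 5 1 ζ ↔ ζ ∈ Ioo (π / 3) (π / 2) ∪ Ioo (3 * π / 4) π := by
  have hζ' : π - ζ ∈ Ioo 0 π := ⟨sub_pos.mpr hζ.2, sub_lt_self π hζ.1⟩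
  rw [← suzukiTakahashi_pi_sub (by decide : Odd 5), suzukiTakahashi_five_zero_iff hζ', mem_union,
    mem_union, sub_mem_Ioo_iff_right, sub_mem_Ioo_iff_right, or_comm]
  ring_nf

end

/-- Suzuki–Takahashi conditions for a 5-string: `(-1)^σ·sin(kζ)·sin((5-k)ζ) > 0`
for `k = 1,…,4` holds iff (`σ = 0` and `ζ ∈ (0, π/4) ∪ (π/2, 2π/3)`) or
(`σ = 1` and `ζ ∈ (π/3, π/2) ∪ (3π/4, π)`). -/
theorem suzuki_takahashi_five_string (ζ : ℝ) (hζ : ζ ∈ Set.Ioo 0 Real.pi)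
    (σ : ℕ) (hσ : σ = 0 ∨ σ = 1) :
    (∀ k : ℕ, 1 ≤ k → k ≤ 4 →
        0 < (-1 : ℝ) ^ σ * Real.sin ((k : ℝ) * ζ) * Real.sin ((5 - (k : ℝ)) * ζ)) ↔
      (σ = 0 ∧ ζ ∈ Set.Ioo 0 (Real.pi / 4) ∪ Set.Ioo (Real.pi / 2) (2 * Real.pi / 3)) ∨
        (σ = 1 ∧ ζ ∈ Set.Ioo (Real.pi / 3) (Real.pi / 2) ∪
          Set.Ioo (3 * Real.pi / 4) Real.pi) := by
  have hdef : (∀ k : ℕ, 1 ≤ k → k ≤ 4 →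
      0 < (-1 : ℝ) ^ σ * Real.sin (k * ζ) * Real.sin ((5 - k) * ζ)) ↔ SuzukiTakahashi 5 σ ζ := by
    simp [SuzukiTakahashi, Nat.lt_succ_iff]
  rw [hdef]
  rcases hσ with rfl | rfl
  · simpa using suzukiTakahashi_five_zero_iff hζ
  · simpa using suzukiTakahashi_five_one_iff hζ
end

section
/- Let n_p and n_h be natural numbers and let (δ_m)_{m≥1} be a sequence of positive reals with δ_m → 0 and m·δ_m → +∞ as m → ∞. Then lim_{m→∞} (2 m δ_m)^{2 n_p n_h} · ∫_{(0,∞)^{n_p}} ∫_{(0,∞)^{n_h}} (∏_{a=1}^{n_p} e^{−k_a}) (∏_{b=1}^{n_h} e^{−t_b}) · (∏_{1≤a<a'≤n_p} (k_a − k_{a'})²) · (∏_{1≤b<b'≤n_h} (t_b − t_{b'})²) · ∏_{a=1}^{n_p} ∏_{b=1}^{n_h} (2 m δ_m + k_a + t_b)^{−2} dk dt = (∏_{j=1}^{n_p} j!·(j−1)!) · (∏_{j=1}^{n_h} j!·(j−1)!). -/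
open MeasureTheory

/-!
The `c`-dependent factor is `∏ (c / (c + k_a + t_b))²` with `c = 2mδ_m → ∞`: it is bounded by one
and tends to one, so by dominated convergence the particle and hole integrals decouple. Each of them
is a Laguerre–Selberg integral, with weight `e^{-y} y^{s-1}`. Its Vandermonde square is a product of
two determinants, so Andréief's identity turns it into `n!` times the Hankel determinant of the
moments `Γ(s + i + j)`. Factoring `Γ(s + i)` out of the `i`-th row leaves the values at `s + i` of
the rising factorials, which are monic of degree `j`, hence the Vandermonde determinant of the
points `s + i`.
-/

section Andreief

variable {ι α 𝕜 : Type*} [Fintype ι] [DecidableEq ι] [RCLike 𝕜] [MeasurableSpace α]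
  {μ : Measure α} [SigmaFinite μ] {f g : ι → α → 𝕜}

theorem det_mul_det_eq_sum_perm {R : Type*} [CommRing R] (A B : Matrix ι ι R) :
    A.det * B.det = ∑ σ : Equiv.Perm ι, ∑ τ : Equiv.Perm ι,
      ((Equiv.Perm.sign σ : ℤ) : R) * ((Equiv.Perm.sign τ : ℤ) : R) *
        ∏ a, A (σ a) a * B (τ a) a := by
  simp only [Matrix.det_apply', Finset.sum_mul_sum, Finset.prod_mul_distrib, mul_mul_mul_comm]

theorem sum_perm_sign_mul_sign_mul_prod {R : Type*} [CommRing R] (M : Matrix ι ι R) :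
    ∑ σ : Equiv.Perm ι, ∑ τ : Equiv.Perm ι,
        ((Equiv.Perm.sign σ : ℤ) : R) * ((Equiv.Perm.sign τ : ℤ) : R) * ∏ a, M (σ a) (τ a) =
      (Fintype.card ι).factorial * M.det := by
  have sum_right (σ : Equiv.Perm ι) : ∑ τ : Equiv.Perm ι,
      ((Equiv.Perm.sign σ : ℤ) : R) * ((Equiv.Perm.sign τ : ℤ) : R) * ∏ a, M (σ a) (τ a) =
        M.det := by
    have sign_sq : ((Equiv.Perm.sign σ : ℤ) : R) * ((Equiv.Perm.sign σ : ℤ) : R) = 1 := by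
      exact_mod_cast congrArg (Int.cast (R := R)) (Int.units_coe_mul_self (Equiv.Perm.sign σ))
    calc
      _ = ((Equiv.Perm.sign σ : ℤ) : R) * (M.submatrix σ id).transpose.det := by
        simp only [Matrix.det_apply', Finset.mul_sum, mul_assoc, Matrix.transpose_apply,
          Matrix.submatrix_apply, id_eq]
      _ = M.det := by
        rw [Matrix.det_transpose, Matrix.det_permute, ← mul_assoc, sign_sq, one_mul]
  simp only [sum_right, Finset.sum_const, Finset.card_univ, Fintype.card_perm, nsmul_eq_mul]

theorem integrable_sign_mul_sign_mul_prod (hfg : ∀ i j, Integrable (fun y => f i y * g j y) μ)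
    (σ τ : Equiv.Perm ι) :
    Integrable (fun x : ι → α => ((Equiv.Perm.sign σ : ℤ) : 𝕜) * ((Equiv.Perm.sign τ : ℤ) : 𝕜) *
      ∏ a, f (σ a) (x a) * g (τ a) (x a)) (Measure.pi fun _ => μ) :=
  (Integrable.fintype_prod (f := fun a y => f (σ a) y * g (τ a) y)
    fun a => hfg (σ a) (τ a)).const_mul _

theorem integrable_det_mul_det (hfg : ∀ i j, Integrable (fun y => f i y * g j y) μ) :
    Integrable (fun x : ι → α =>
      (Matrix.of fun i j => f i (x j)).det * (Matrix.of fun i j => g i (x j)).det)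
      (Measure.pi fun _ => μ) := by
  simp only [det_mul_det_eq_sum_perm, Matrix.of_apply]
  exact integrable_finsetSum _ fun σ _ => integrable_finsetSum _ fun τ _ =>
    integrable_sign_mul_sign_mul_prod hfg σ τ

theorem integral_det_mul_det (hfg : ∀ i j, Integrable (fun y => f i y * g j y) μ) :
    ∫ x : ι → α, (Matrix.of fun i j => f i (x j)).det * (Matrix.of fun i j => g i (x j)).det
        ∂(Measure.pi fun _ => μ) =
      (Fintype.card ι).factorial * (Matrix.of fun i j => ∫ y, f i y * g j y ∂μ).det := by
  simp only [det_mul_det_eq_sum_perm, Matrix.of_apply, ← sum_perm_sign_mul_sign_mul_prod]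
  rw [integral_finsetSum _ fun σ _ => integrable_finsetSum _ fun τ _ =>
    integrable_sign_mul_sign_mul_prod hfg σ τ]
  refine Finset.sum_congr rfl fun σ _ => ?_
  rw [integral_finsetSum _ fun τ _ => integrable_sign_mul_sign_mul_prod hfg σ τ]
  refine Finset.sum_congr rfl fun τ _ => ?_
  rw [integral_const_mul,
    integral_fintype_prod_eq_prod (f := fun a y => f (σ a) y * g (τ a) y)]

end Andreief

section VandermondeSquare

theorem prod_sub_sq_eq_det_vandermonde_sq {R : Type*} [CommRing R] {n : ℕ} (x : Fin n → R) :
    ∏ p ∈ Finset.univ.filter (fun p : Fin n × Fin n => p.1 < p.2), (x p.1 - x p.2) ^ 2 =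
      (Matrix.vandermonde x).det ^ 2 := by
  simp only [Matrix.det_vandermonde, ← Finset.prod_pow, Finset.prod_filter,
    Fintype.prod_prod_type]
  simp only [← Finset.prod_filter, Finset.filter_lt_eq_Ioi]
  exact Finset.prod_congr rfl fun i _ => Finset.prod_congr rfl fun j _ => sub_sq_comm (x i) (x j)

theorem prod_mul_prod_sub_sq_eq_det_mul_det {R : Type*} [CommRing R] {n : ℕ} (w x : Fin n → R) :
    (∏ a, w a) *
        ∏ p ∈ Finset.univ.filter (fun p : Fin n × Fin n => p.1 < p.2), (x p.1 - x p.2) ^ 2 =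
      (Matrix.of fun i j : Fin n => w j * x j ^ (i : ℕ)).det *
        (Matrix.of fun i j : Fin n => x j ^ (i : ℕ)).det := by
  have det_eq_vandermonde : (Matrix.of fun i j : Fin n => x j ^ (i : ℕ)).det =
      (Matrix.vandermonde x).det :=
    Matrix.det_transpose (Matrix.vandermonde x)
  have det_weighted := Matrix.det_mul_row w (Matrix.of fun i j : Fin n => x j ^ (i : ℕ))
  simp only [Matrix.of_apply] at det_weighted
  rw [prod_sub_sq_eq_det_vandermonde_sq, det_weighted, det_eq_vandermonde]
  ring

variable {𝕜 : Type*} [RCLike 𝕜] [MeasurableSpace 𝕜] {μ : Measure 𝕜} [SigmaFinite μ]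
  {w : 𝕜 → 𝕜} {n : ℕ}

theorem integrable_prod_mul_prod_sub_sq
    (hw : ∀ i j : Fin n, Integrable (fun y => w y * y ^ ((i : ℕ) + (j : ℕ))) μ) :
    Integrable (fun x : Fin n → 𝕜 => (∏ a, w (x a)) *
      ∏ p ∈ Finset.univ.filter (fun p : Fin n × Fin n => p.1 < p.2), (x p.1 - x p.2) ^ 2)
      (Measure.pi fun _ => μ) := by
  simp only [pow_add, ← mul_assoc] at hw
  simp only [prod_mul_prod_sub_sq_eq_det_mul_det]
  exact integrable_det_mul_det (f := fun (i : Fin n) y => w y * y ^ (i : ℕ)) hw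

theorem integral_prod_mul_prod_sub_sq
    (hw : ∀ i j : Fin n, Integrable (fun y => w y * y ^ ((i : ℕ) + (j : ℕ))) μ) :
    ∫ x : Fin n → 𝕜, (∏ a, w (x a)) *
        ∏ p ∈ Finset.univ.filter (fun p : Fin n × Fin n => p.1 < p.2), (x p.1 - x p.2) ^ 2
        ∂(Measure.pi fun _ => μ) =
      n.factorial *
        (Matrix.of fun i j : Fin n => ∫ y, w y * y ^ ((i : ℕ) + (j : ℕ)) ∂μ).det := by
  simp only [pow_add, ← mul_assoc] at hw ⊢
  simp only [prod_mul_prod_sub_sq_eq_det_mul_det]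
  rw [integral_det_mul_det (f := fun (i : Fin n) y => w y * y ^ (i : ℕ)) hw, Fintype.card_fin]

end VandermondeSquare

section Laguerre

theorem Gamma_add_natCast_eq_mul_ascPochhammer {s : ℝ} (hs : ∀ m : ℕ, s ≠ -m) (n : ℕ) :
    Real.Gamma (s + n) = Real.Gamma s * (ascPochhammer ℝ n).eval s := by
  induction n with
  | zero => simp
  | succ n ih =>
    have add_ne_zero : s + n ≠ 0 := fun h => hs n (eq_neg_of_add_eq_zero_left h)
    rw [Nat.cast_succ, ← add_assoc, Real.Gamma_add_one add_ne_zero, ih,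
      ascPochhammer_succ_eval]
    ring

theorem det_vandermonde_natCast_add {R : Type*} [CommRing R] (n : ℕ) (s : R) :
    (Matrix.vandermonde fun i : Fin n => ((i : ℕ) : R) + s).det =
      ∏ j ∈ Finset.range n, (j.factorial : R) := by
  rw [Matrix.det_vandermonde_add]
  cases n with
  | zero => simp
  | succ n =>
    rw [Matrix.det_vandermonde_id_eq_superFactorial, ← Nat.prod_range_succ_factorial,
      Nat.cast_prod]

theorem det_Gamma_add_add {s : ℝ} (hs : ∀ m : ℕ, s ≠ -m) (n : ℕ) :
    (Matrix.of fun i j : Fin n => Real.Gamma (s + ((i : ℕ) + (j : ℕ) : ℕ))).det =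
      ∏ j ∈ Finset.range n, Real.Gamma (s + j) * j.factorial := by
  have factor_row (i j : Fin n) : Real.Gamma (s + ((i : ℕ) + (j : ℕ) : ℕ)) =
      Real.Gamma (s + (i : ℕ)) * (ascPochhammer ℝ j).eval (((i : ℕ) : ℝ) + s) := by
    have add_ne_neg (m : ℕ) : s + (i : ℕ) ≠ -m := fun h =>
      hs (i + m) (by push_cast; linarith)
    rw [Nat.cast_add, ← add_assoc, Gamma_add_natCast_eq_mul_ascPochhammer add_ne_neg, add_comm s]
  have det_rows := Matrix.det_mul_column (fun i : Fin n => Real.Gamma (s + (i : ℕ)))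
    (Matrix.of fun i j : Fin n => (ascPochhammer ℝ j).eval (((i : ℕ) : ℝ) + s))
  simp only [Matrix.of_apply] at det_rows
  simp only [factor_row]
  rw [det_rows, ← Matrix.det_eval_matrixOfPolynomials_eq_det_vandermonde
      (fun i : Fin n => ((i : ℕ) : ℝ) + s) (fun j => ascPochhammer ℝ j)
      (fun j => ascPochhammer_natDegree ℝ j) (fun j => monic_ascPochhammer ℝ j),
    det_vandermonde_natCast_add, Fin.prod_univ_eq_prod_range (fun j => Real.Gamma (s + j)),
    Finset.prod_mul_distrib]

theorem integrableOn_exp_neg_mul_rpow_mul_pow {s : ℝ} (hs : 0 < s) (k : ℕ) :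
    IntegrableOn (fun y : ℝ => Real.exp (-y) * y ^ (s - 1) * y ^ k) (Set.Ioi 0) := by
  refine (Real.GammaIntegral_convergent (s := s + k) (by positivity)).congr_fun
    (fun y hy => ?_) measurableSet_Ioi
  rw [mul_assoc, ← Real.rpow_add_natCast hy.ne', add_sub_right_comm]

theorem integral_exp_neg_mul_rpow_mul_pow {s : ℝ} (hs : 0 < s) (k : ℕ) :
    ∫ y in Set.Ioi (0 : ℝ), Real.exp (-y) * y ^ (s - 1) * y ^ k = Real.Gamma (s + k) := by
  rw [Real.Gamma_eq_integral (by positivity)]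
  refine setIntegral_congr_fun measurableSet_Ioi fun y hy => ?_
  rw [mul_assoc, ← Real.rpow_add_natCast hy.ne', add_sub_right_comm]

/-- The unnormalised joint eigenvalue density of the Laguerre unitary ensemble of size `n`, the
single-particle weight being `e^{-y} y^{s-1}`, so that `s = 1` is the purely exponential weight. -/
noncomputable def laguerreDensity (s : ℝ) {n : ℕ} (x : Fin n → ℝ) : ℝ :=
  (∏ a, Real.exp (-x a) * x a ^ (s - 1)) *
    ∏ p ∈ Finset.univ.filter (fun p : Fin n × Fin n => p.1 < p.2), (x p.1 - x p.2) ^ 2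

theorem integrable_laguerreDensity {s : ℝ} (hs : 0 < s) (n : ℕ) :
    Integrable (laguerreDensity s (n := n))
      (Measure.pi fun _ => volume.restrict (Set.Ioi 0)) :=
  integrable_prod_mul_prod_sub_sq (w := fun y => Real.exp (-y) * y ^ (s - 1))
    fun i j => integrableOn_exp_neg_mul_rpow_mul_pow hs (i + j)

theorem integral_laguerreDensity {s : ℝ} (hs : 0 < s) (n : ℕ) :
    ∫ x : Fin n → ℝ, laguerreDensity s x ∂(Measure.pi fun _ => volume.restrict (Set.Ioi 0)) =
      ∏ j ∈ Finset.range n, ((j + 1).factorial : ℝ) * Real.Gamma (s + j) := by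
  have factorial_mul_prod : (n.factorial : ℝ) * ∏ j ∈ Finset.range n, (j.factorial : ℝ) =
      ∏ j ∈ Finset.range n, ((j + 1).factorial : ℝ) := by
    rw [mul_comm, ← Finset.prod_range_succ, Finset.prod_range_succ', Nat.factorial_zero,
      Nat.cast_one, mul_one]
  unfold laguerreDensity
  rw [integral_prod_mul_prod_sub_sq (w := fun y => Real.exp (-y) * y ^ (s - 1))
    fun i j => integrableOn_exp_neg_mul_rpow_mul_pow hs (i + j)]
  simp only [integral_exp_neg_mul_rpow_mul_pow hs]
  have ne_neg_natCast (m : ℕ) : s ≠ -m := ((neg_nonpos.2 m.cast_nonneg).trans_lt hs).ne'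
  rw [det_Gamma_add_add ne_neg_natCast, Finset.prod_mul_distrib, Finset.prod_mul_distrib,
    ← factorial_mul_prod]
  ring

theorem prod_range_factorial_mul_Gamma_one_add (n : ℕ) :
    ∏ j ∈ Finset.range n, ((j + 1).factorial : ℝ) * Real.Gamma (1 + j) =
      ∏ j ∈ Finset.Icc 1 n, ((Nat.factorial j : ℝ) * (Nat.factorial (j - 1) : ℝ)) := by
  simp only [add_comm (1 : ℝ), Real.Gamma_nat_eq_factorial]
  rw [Finset.range_eq_Ico]
  exact Finset.prod_Ico_add' (fun j => (j.factorial : ℝ) * ((j - 1).factorial : ℝ)) 0 n 1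

end Laguerre

section Decoupling

open Filter Topology

theorem tendsto_self_div_self_add_atTop (s : ℝ) :
    Tendsto (fun c : ℝ => c / (c + s)) atTop (𝓝 1) := by
  have h : Tendsto (fun c : ℝ => 1 - s / (c + s)) atTop (𝓝 (1 - 0)) :=
    (tendsto_const_nhds.div_atTop (tendsto_atTop_add_const_right _ s tendsto_id)).const_sub 1
  rw [sub_zero] at h
  refine h.congr' ?_
  filter_upwards [eventually_gt_atTop (-s)] with c hc
  have : c + s ≠ 0 := by linarith
  field_simp
  ring

variable {α κ E : Type*} [MeasurableSpace α] {μ : Measure α} [Fintype κ]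
  [NormedAddCommGroup E] [NormedSpace ℝ E] {g : α → E} {φ : κ → α → ℝ}

theorem tendsto_integral_prod_div_add_pow_smul (hg : Integrable g μ)
    (hφ : ∀ i, AEMeasurable (φ i) μ) (hφ_nonneg : ∀ i, 0 ≤ᵐ[μ] φ i) (k : ℕ) :
    Tendsto (fun c : ℝ => ∫ x, (∏ i, (c / (c + φ i x)) ^ k) • g x ∂μ) atTop
      (𝓝 (∫ x, g x ∂μ)) := by
  refine tendsto_integral_filter_of_dominated_convergence (fun x => ‖g x‖) ?_ ?_ hg.norm ?_
  · exact Eventually.of_forall fun c => AEStronglyMeasurable.smul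
      (AEMeasurable.aestronglyMeasurable (by fun_prop)) hg.aestronglyMeasurable
  · filter_upwards [eventually_gt_atTop 0] with c hc
    filter_upwards [ae_all_iff.2 hφ_nonneg] with x hx
    have ratio_nonneg (i) : 0 ≤ c / (c + φ i x) := div_nonneg hc.le (add_nonneg hc.le (hx i))
    have ratio_le_one (i) : c / (c + φ i x) ≤ 1 :=
      div_le_one_of_le₀ (le_add_of_nonneg_right (hx i)) (add_nonneg hc.le (hx i))
    rw [norm_smul,
      Real.norm_of_nonneg (Finset.prod_nonneg fun i _ => pow_nonneg (ratio_nonneg i) k)]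
    exact mul_le_of_le_one_left (norm_nonneg _) <| Finset.prod_le_one
      (fun i _ => pow_nonneg (ratio_nonneg i) k)
      fun i _ => pow_le_one₀ (ratio_nonneg i) (ratio_le_one i)
  · refine Eventually.of_forall fun x => ?_
    have ratio_prod : Tendsto (fun c : ℝ => ∏ i, (c / (c + φ i x)) ^ k) atTop (𝓝 1) := by
      simpa only [one_pow, Finset.prod_const_one] using tendsto_finsetProd Finset.univ
        fun i _ => (tendsto_self_div_self_add_atTop (φ i x)).pow k
    simpa only [one_smul] using ratio_prod.smul_const (g x)

theorem tendsto_pow_smul_integral_prod_inv_smul (hg : Integrable g μ)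
    (hφ : ∀ i, AEMeasurable (φ i) μ) (hφ_nonneg : ∀ i, 0 ≤ᵐ[μ] φ i) (k : ℕ) :
    Tendsto (fun c : ℝ => c ^ (k * Fintype.card κ) •
      ∫ x, (∏ i, ((c + φ i x) ^ k)⁻¹) • g x ∂μ) atTop (𝓝 (∫ x, g x ∂μ)) := by
  refine (tendsto_integral_prod_div_add_pow_smul hg hφ hφ_nonneg k).congr fun c => ?_
  simp only [← integral_smul, smul_smul, div_eq_mul_inv, mul_pow, inv_pow,
    Finset.prod_mul_distrib, Finset.prod_const, Finset.card_univ, pow_mul]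

end Decoupling

section PositiveOrthants

variable {ι κ : Type*}

theorem positive_orthants_eq_prod :
    {z : (ι → ℝ) × (κ → ℝ) | (∀ a, 0 < z.1 a) ∧ ∀ b, 0 < z.2 b} =
      (Set.univ.pi fun _ => Set.Ioi 0) ×ˢ (Set.univ.pi fun _ => Set.Ioi 0) := by
  ext z
  simp only [Set.mem_ofPred_eq, Set.mem_prod, Set.mem_univ_pi, Set.mem_Ioi]

theorem measurableSet_positive_orthants [Countable ι] [Countable κ] :
    MeasurableSet {z : (ι → ℝ) × (κ → ℝ) | (∀ a, 0 < z.1 a) ∧ ∀ b, 0 < z.2 b} := by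
  rw [positive_orthants_eq_prod]
  exact (MeasurableSet.univ_pi fun _ => measurableSet_Ioi).prod
    (MeasurableSet.univ_pi fun _ => measurableSet_Ioi)

theorem volume_restrict_positive_orthants [Fintype ι] [Fintype κ] :
    volume.restrict {z : (ι → ℝ) × (κ → ℝ) | (∀ a, 0 < z.1 a) ∧ ∀ b, 0 < z.2 b} =
      (Measure.pi fun _ => volume.restrict (Set.Ioi 0)).prod
        (Measure.pi fun _ => volume.restrict (Set.Ioi 0)) := by
  rw [positive_orthants_eq_prod, Measure.volume_eq_prod, ← Measure.prod_restrict, volume_pi,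
    volume_pi, Measure.restrict_pi_pi, Measure.restrict_pi_pi]

end PositiveOrthants

theorem fermi_edge_model_integral_limit_general (np nh : ℕ) {s t : ℝ} (hs : 0 < s) (ht : 0 < t) :
    Filter.Tendsto
      (fun c : ℝ =>
        c ^ (2 * np * nh) *
          ∫ z in {z : (Fin np → ℝ) × (Fin nh → ℝ) | (∀ a, 0 < z.1 a) ∧ ∀ b, 0 < z.2 b},
            (∏ a, Real.exp (-z.1 a) * z.1 a ^ (s - 1)) *
              (∏ b, Real.exp (-z.2 b) * z.2 b ^ (t - 1)) *
              (∏ p ∈ Finset.univ.filter (fun p : Fin np × Fin np => p.1 < p.2),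
                (z.1 p.1 - z.1 p.2) ^ 2) *
              (∏ p ∈ Finset.univ.filter (fun p : Fin nh × Fin nh => p.1 < p.2),
                (z.2 p.1 - z.2 p.2) ^ 2) *
              ∏ a, ∏ b, ((c + z.1 a + z.2 b) ^ 2)⁻¹)
      Filter.atTop
      (nhds
        ((∏ j ∈ Finset.range np, ((j + 1).factorial : ℝ) * Real.Gamma (s + j)) *
          ∏ j ∈ Finset.range nh, ((j + 1).factorial : ℝ) * Real.Gamma (t + j))) := by
  have density_integrable :=
    (integrable_laguerreDensity hs np).mul_prod (integrable_laguerreDensity ht nh)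
  rw [← integral_laguerreDensity hs, ← integral_laguerreDensity ht, ← integral_prod_mul]
  rw [← volume_restrict_positive_orthants] at density_integrable ⊢
  refine (tendsto_pow_smul_integral_prod_inv_smul density_integrable
    (φ := fun (p : Fin np × Fin nh) z => z.1 p.1 + z.2 p.2) (fun p => by fun_prop)
    (fun p => ae_restrict_of_forall_mem measurableSet_positive_orthants fun z hz =>
      add_nonneg (hz.1 p.1).le (hz.2 p.2).le) 2).congr fun c => ?_
  simp only [Fintype.card_prod, Fintype.card_fin, ← mul_assoc, smul_eq_mul,
    Fintype.prod_prod_type, ← add_assoc, laguerreDensity]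
  congr 2 with z
  ring

/-- Large-`m` limit of the model integral describing particle and hole rapidities
collapsing onto an endpoint of the Fermi zone: with `δ_m → 0` and `m·δ_m → ∞`,
`(2mδ_m)^{2 n_p n_h} · ∬ ∏ e^{-k_a} e^{-t_b} ∏(k_a-k_{a'})² ∏(t_b-t_{b'})²
  ∏(2mδ_m+k_a+t_b)^{-2} → (∏_{j=1}^{n_p} j!(j-1)!)·(∏_{j=1}^{n_h} j!(j-1)!)`. -/
theorem fermi_edge_model_integral_limit (np nh : ℕ) (δ : ℕ → ℝ)
    (hδpos : ∀ m : ℕ, 1 ≤ m → 0 < δ m)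
    (hδ0 : Filter.Tendsto δ Filter.atTop (nhds 0))
    (hmδ : Filter.Tendsto (fun m : ℕ => (m : ℝ) * δ m) Filter.atTop Filter.atTop) :
    Filter.Tendsto
      (fun m : ℕ =>
        (2 * (m : ℝ) * δ m) ^ (2 * np * nh) *
          ∫ z in {z : (Fin np → ℝ) × (Fin nh → ℝ) |
              (∀ a, 0 < z.1 a) ∧ ∀ b, 0 < z.2 b},
            (∏ a, Real.exp (-z.1 a)) * (∏ b, Real.exp (-z.2 b)) *
              (∏ p ∈ Finset.univ.filter (fun p : Fin np × Fin np => p.1 < p.2),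
                (z.1 p.1 - z.1 p.2) ^ 2) *
              (∏ p ∈ Finset.univ.filter (fun p : Fin nh × Fin nh => p.1 < p.2),
                (z.2 p.1 - z.2 p.2) ^ 2) *
              ∏ a, ∏ b, ((2 * (m : ℝ) * δ m + z.1 a + z.2 b) ^ 2)⁻¹)
      Filter.atTop
      (nhds
        ((∏ j ∈ Finset.Icc 1 np, ((Nat.factorial j : ℝ) * (Nat.factorial (j - 1) : ℝ))) *
          ∏ j ∈ Finset.Icc 1 nh, ((Nat.factorial j : ℝ) * (Nat.factorial (j - 1) : ℝ)))) := by
  have limit := (fermi_edge_model_integral_limit_general np nh one_pos one_pos).comp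
    (hmδ.const_mul_atTop two_pos)
  simpa only [Function.comp_def, sub_self, Real.rpow_zero, mul_one, ← mul_assoc,
    prod_range_factorial_mul_Gamma_one_add] using limit
end
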